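/- Let S be a join-semilattice with a least element 0. Suppose that for every Boolean algebra B (in the same universe as S), every ⟨∨,0⟩-homomorphism μ : B → S, and all a₀, a₁ ∈ S with μ(1) = a₀ ∨ a₁, there exist ⟨∨,0⟩-homomorphisms μ₀, μ₁ : B → S such that μ(x) = μ₀(x) ∨ μ₁(x) for all x ∈ B, μ₀(1) = a₀, and μ₁(1) = a₁. Then S is a lattice; that is, every pair of elements of S has a greatest lower bound (equivalently, for all a₀, a₁ ∈ S the set {x ∈ S : x ≤ a₀ and x ≤ a₁} has a largest element). -/

import Mathlib

/-!
Suppose the common lower bounds of `a0` and `a1` form a set `C` without largest element; `C` is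
closed under joins, hence infinite. Work in the grid `(C → C) × C` with weight `w (F, j) = F j`,
and on the power set of the grid consider the `⟨∨,0⟩`-homomorphism `μ` (`gridHom`) that sends a
finite set to the join of its weights, an infinite set meeting finitely many rows `{F} × C` to
`a0`, an infinite set meeting finitely many columns to `a1`, and every other set to `a0 ⊔ a1`.

Given a decomposition `μ = μ0 ⊔ μ1`, the element `α F = μ1 (row F)` is below `μ (row F) ≤ a0` and
below `a1`, so it lies in `C`; likewise `β j = μ0 (column j)` lies in `C`. Evaluating at a point
gives `F j ≤ α F ⊔ β j` for all `F` and `j`. Choosing `F j ∈ C` not below `j ⊔ β j` and then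
`j = α F` is a contradiction.
-/

open Classical in
/-- The map on subsets of a grid `R × K` that sends a finite set to the join of the weights `w` of
its points, and an infinite set to `a0`, `a1` or `a0 ⊔ a1`, where `a0` is included iff the set
meets infinitely many columns, and `a1` is included iff it meets infinitely many rows. An infinite
set does at least one of the two. -/
noncomputable def gridFun {S R K : Type*} [SemilatticeSup S] [OrderBot S]
    (a0 a1 : S) (w : R × K → S) (x : Set (R × K)) : S :=
  if hx : x.Finite then hx.toFinset.sup w
  else (if (Prod.snd '' x).Finite then ⊥ else a0) ⊔ (if (Prod.fst '' x).Finite then ⊥ else a1)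

section Grid

variable {S R K : Type*} [SemilatticeSup S] [OrderBot S] {a0 a1 : S} {w : R × K → S}

lemma finite_of_finite_images {x : Set (R × K)} (h1 : (Prod.fst '' x).Finite)
    (h2 : (Prod.snd '' x).Finite) : x.Finite :=
  (h1.prod h2).subset fun p hp => ⟨⟨p, hp, rfl⟩, ⟨p, hp, rfl⟩⟩

lemma gridFun_of_finite {x : Set (R × K)} (hx : x.Finite) :
    gridFun a0 a1 w x = hx.toFinset.sup w := by
  simp [gridFun, hx]

open Classical in
lemma gridFun_of_infinite {x : Set (R × K)} (hx : ¬ x.Finite) :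
    gridFun a0 a1 w x = (if (Prod.snd '' x).Finite then ⊥ else a0) ⊔
      (if (Prod.fst '' x).Finite then ⊥ else a1) := by
  simp only [gridFun, hx, dite_false]

lemma gridFun_singleton (p : R × K) : gridFun a0 a1 w {p} = w p := by
  rw [gridFun_of_finite (Set.finite_singleton p)]
  simp

lemma gridFun_le_left (hw0 : ∀ p, w p ≤ a0) {x : Set (R × K)} (hx : (Prod.fst '' x).Finite) :
    gridFun a0 a1 w x ≤ a0 := by
  by_cases hf : x.Finite
  · rw [gridFun_of_finite hf]
    exact Finset.sup_le fun p _ => hw0 p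
  · rw [gridFun_of_infinite hf, if_pos hx]
    split_ifs <;> simp

lemma gridFun_le_right (hw1 : ∀ p, w p ≤ a1) {x : Set (R × K)} (hx : (Prod.snd '' x).Finite) :
    gridFun a0 a1 w x ≤ a1 := by
  by_cases hf : x.Finite
  · rw [gridFun_of_finite hf]
    exact Finset.sup_le fun p _ => hw1 p
  · rw [gridFun_of_infinite hf, if_pos hx]
    split_ifs <;> simp

/-- Adding a finite set does not change the value at an infinite set, since all weights lie below
both `a0` and `a1`. -/
lemma gridFun_union_of_finite_right (hw0 : ∀ p, w p ≤ a0) (hw1 : ∀ p, w p ≤ a1)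
    {x y : Set (R × K)} (hx : ¬ x.Finite) (hy : y.Finite) :
    gridFun a0 a1 w (x ∪ y) = gridFun a0 a1 w x ⊔ gridFun a0 a1 w y := by
  have hxy : ¬ (x ∪ y).Finite := fun hf => hx (hf.subset Set.subset_union_left)
  have h0 := gridFun_le_left (a1 := a1) hw0 (hy.image Prod.fst)
  have h1 := gridFun_le_right (a0 := a0) hw1 (hy.image Prod.snd)
  have hle : gridFun a0 a1 w y ≤ gridFun a0 a1 w x := by
    rw [gridFun_of_infinite hx]
    by_cases hs : (Prod.snd '' x).Finite
    · have hr : ¬ (Prod.fst '' x).Finite := fun hr => hx (finite_of_finite_images hr hs)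
      rw [if_neg hr]
      exact le_sup_of_le_right h1
    · rw [if_neg hs]
      exact le_sup_of_le_left h0
  rw [sup_eq_left.mpr hle, gridFun_of_infinite hxy, gridFun_of_infinite hx]
  have hs : (Prod.snd '' (x ∪ y)).Finite ↔ (Prod.snd '' x).Finite := by
    simp [Set.image_union, Set.finite_union, hy.image]
  have hr : (Prod.fst '' (x ∪ y)).Finite ↔ (Prod.fst '' x).Finite := by
    simp [Set.image_union, Set.finite_union, hy.image]
  classical
  simp only [hs, hr]

lemma gridFun_union (hw0 : ∀ p, w p ≤ a0) (hw1 : ∀ p, w p ≤ a1) (x y : Set (R × K)) :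
    gridFun a0 a1 w (x ∪ y) = gridFun a0 a1 w x ⊔ gridFun a0 a1 w y := by
  classical
  by_cases hx : x.Finite <;> by_cases hy : y.Finite
  · rw [gridFun_of_finite hx, gridFun_of_finite hy, gridFun_of_finite (hx.union hy),
      Set.Finite.toFinset_union hx hy, Finset.sup_union]
  · rw [Set.union_comm, sup_comm, gridFun_union_of_finite_right hw0 hw1 hy hx]
  · exact gridFun_union_of_finite_right hw0 hw1 hx hy
  · have hxy : ¬ (x ∪ y).Finite := fun hf => hx (hf.subset Set.subset_union_left)
    rw [gridFun_of_infinite hx, gridFun_of_infinite hy, gridFun_of_infinite hxy, sup_sup_sup_comm]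
    simp only [Set.image_union, Set.finite_union]
    congr 1
    · by_cases h1 : (Prod.snd '' x).Finite <;> by_cases h2 : (Prod.snd '' y).Finite <;>
        simp [h1, h2]
    · by_cases h1 : (Prod.fst '' x).Finite <;> by_cases h2 : (Prod.fst '' y).Finite <;>
        simp [h1, h2]

/-- `gridFun` as a `⟨∨,0⟩`-homomorphism on the power set of the grid, for weights below both `a0`
and `a1`. -/
noncomputable def gridHom (hw0 : ∀ p, w p ≤ a0) (hw1 : ∀ p, w p ≤ a1) :
    SupBotHom (Set (R × K)) S where
  toFun := gridFun a0 a1 w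
  map_sup' := gridFun_union hw0 hw1
  map_bot' := by
    change gridFun a0 a1 w ∅ = ⊥
    rw [gridFun_of_finite Set.finite_empty]
    simp

lemma gridFun_univ [Infinite R] [Infinite K] : gridFun a0 a1 w Set.univ = a0 ⊔ a1 := by
  have hn : ¬ (Set.univ : Set (R × K)).Finite := Set.infinite_univ
  have h1 : ¬ (Prod.fst '' (Set.univ : Set (R × K))).Finite := by
    rw [Set.image_univ, Prod.range_fst]
    exact Set.infinite_univ
  have h2 : ¬ (Prod.snd '' (Set.univ : Set (R × K))).Finite := by
    rw [Set.image_univ, Prod.range_snd]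
    exact Set.infinite_univ
  rw [gridFun_of_infinite hn, if_neg h1, if_neg h2]

end Grid

/-- Let `S` be a join-semilattice with a least element `0`.  Suppose that
for every Boolean algebra `B` (in the same universe as `S`), every `⟨∨,0⟩`-homomorphism
`μ : B → S`, and all `a0, a1 ∈ S` with `μ 1 = a0 ⊔ a1`, there exist `⟨∨,0⟩`-homomorphisms
`μ0, μ1 : B → S` such that `μ x = μ0 x ⊔ μ1 x` for all `x`, `μ0 1 = a0` and `μ1 1 = a1`.
Then `S` is a lattice: for all `a0, a1 ∈ S` the set of common lower bounds of `a0` and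
`a1` has a largest element. -/
theorem stmt1 {S : Type u} [SemilatticeSup S] [OrderBot S]
    (h : ∀ (B : Type u) [BooleanAlgebra B] (μ : SupBotHom B S) (a0 a1 : S),
      μ ⊤ = a0 ⊔ a1 →
        ∃ μ0 μ1 : SupBotHom B S,
          (∀ x : B, μ x = μ0 x ⊔ μ1 x) ∧ μ0 ⊤ = a0 ∧ μ1 ⊤ = a1) :
    ∀ a0 a1 : S, ∃ m : S, (m ≤ a0 ∧ m ≤ a1) ∧ ∀ x : S, x ≤ a0 → x ≤ a1 → x ≤ m := by
  intro a0 a1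
  by_contra! hno
  let C : Type u := {c : S // c ≤ a0 ∧ c ≤ a1}
  have hC (c : C) : ∃ d : C, ¬ d.1 ≤ c.1 := by
    obtain ⟨x, h0, h1, hx⟩ := hno c.1 c.2
    exact ⟨⟨x, h0, h1⟩, hx⟩
  have : Nonempty C := ⟨⟨⊥, bot_le, bot_le⟩⟩
  have : NoMaxOrder C := ⟨fun c => by
    obtain ⟨d, hd⟩ := hC c
    refine ⟨⟨c.1 ⊔ d.1, sup_le c.2.1 d.2.1, sup_le c.2.2 d.2.2⟩, ?_⟩
    exact Subtype.coe_lt_coe.mp (left_lt_sup.mpr hd)⟩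
  have : Infinite C := NoMaxOrder.infinite
  have : Infinite (C → C) := inferInstance
  let w : (C → C) × C → S := fun p => (p.1 p.2).1
  have hw0 (p) : w p ≤ a0 := (p.1 p.2).2.1
  have hw1 (p) : w p ≤ a1 := (p.1 p.2).2.2
  obtain ⟨μ0, μ1, hμ, ht0, ht1⟩ := h (Set ((C → C) × C)) (gridHom hw0 hw1) a0 a1 gridFun_univ
  replace hμ (x : Set ((C → C) × C)) : gridFun a0 a1 w x = μ0 x ⊔ μ1 x := hμ x
  let row (F : C → C) : Set ((C → C) × C) := {p | p.1 = F}
  let col (j : C) : Set ((C → C) × C) := {p | p.2 = j}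
  have hrow (F) : μ1 (row F) ≤ a0 := by
    refine (le_sup_right.trans (hμ (row F)).ge).trans (gridFun_le_left hw0 ?_)
    refine (Set.finite_singleton F).subset ?_
    rintro _ ⟨p, hp, rfl⟩
    exact hp
  have hcol (j) : μ0 (col j) ≤ a1 := by
    refine (le_sup_left.trans (hμ (col j)).ge).trans (gridFun_le_right hw1 ?_)
    refine (Set.finite_singleton j).subset ?_
    rintro _ ⟨p, hp, rfl⟩
    exact hp
  let α (F : C → C) : C := ⟨μ1 (row F), hrow F, ht1 ▸ OrderHomClass.mono μ1 le_top⟩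
  let β (j : C) : C := ⟨μ0 (col j), ht0 ▸ OrderHomClass.mono μ0 le_top, hcol j⟩
  have key (F : C → C) (j : C) : (F j).1 ≤ (α F).1 ⊔ (β j).1 := by
    have hp : (F j).1 = μ0 {(F, j)} ⊔ μ1 {(F, j)} := by
      rw [← hμ, gridFun_singleton]
    rw [hp, sup_comm]
    refine sup_le_sup (OrderHomClass.mono μ1 ?_) (OrderHomClass.mono μ0 ?_)
    · exact Set.singleton_subset_iff.mpr rfl
    · exact Set.singleton_subset_iff.mpr rfl
  choose F hF using fun j : C =>
    hC ⟨j.1 ⊔ (β j).1, sup_le j.2.1 (β j).2.1, sup_le j.2.2 (β j).2.2⟩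
  exact hF (α F) (key F (α F))
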